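/- arXiv:1506.02555 — 3 statements merged into one kernel-verified Lean document; each statement's English description precedes it below -/
import Mathlib

section
/- Let γ > 1 be real, let n ≥ 2 be an integer, and let w₀ be a real number with w₀ ≥ 1/(2√3) satisfying (1 − γ)·R_n(w₀) + 2·w₀²·R_n'(w₀) = 0. Then 2w₀ ≤ γ − 1, and hence −1/(2w₀) ≤ −1/(γ−1). -/
/-- `R n x = ∑_{m=0}^{n} ((n+m)! / (m! (n-m)!)) x^m`, real version. -/
noncomputable def R (n : ℕ) (x : ℝ) : ℝ :=
  ∑ m ∈ Finset.range (n + 1),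
    ((Nat.factorial (n + m) : ℝ) / ((Nat.factorial m : ℝ) * (Nat.factorial (n - m) : ℝ))) * x ^ m

/-!
A root `w > 0` satisfies `(γ - 1) p(w) = 2w · w p'(w)` with `p = R n`, so the bound reduces to
`p(w) ≤ w p'(w)`. The coefficients of `X p' - p` are `(m - 1) pₘ`: only the constant one is
negative, and for `w` above the threshold the quadratic term alone outweighs it.
-/

open Polynomial

/-- The polynomial with evaluation function `R n`; it is the Bessel polynomial `y_n` at `2X`. -/
noncomputable def scaledBesselPoly (n : ℕ) : ℝ[X] :=
  ∑ m ∈ Finset.range (n + 1),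
    monomial m (((n + m).factorial : ℝ) / ((m.factorial : ℝ) * ((n - m).factorial : ℝ)))

theorem R_eq_eval_scaledBesselPoly (n : ℕ) : R n = fun x ↦ (scaledBesselPoly n).eval x := by
  ext x
  simp only [R, scaledBesselPoly, eval_finsetSum, eval_monomial]

theorem coeff_scaledBesselPoly (n m : ℕ) :
    (scaledBesselPoly n).coeff m =
      if m ≤ n then
        ((n + m).factorial : ℝ) / ((m.factorial : ℝ) * ((n - m).factorial : ℝ))
      else 0 := by
  simp [scaledBesselPoly, coeff_monomial]

theorem coeff_scaledBesselPoly_nonneg (n m : ℕ) : 0 ≤ (scaledBesselPoly n).coeff m := by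
  rw [coeff_scaledBesselPoly]
  split_ifs <;> positivity

theorem coeff_zero_scaledBesselPoly (n : ℕ) : (scaledBesselPoly n).coeff 0 = 1 := by
  simp [coeff_scaledBesselPoly, Nat.factorial_ne_zero]

theorem coeff_two_scaledBesselPoly (n : ℕ) :
    (scaledBesselPoly n).coeff 2 = ((n : ℝ) - 1) * n * (n + 1) * (n + 2) / 2 := by
  match n with
  | 0 | 1 => simp [coeff_scaledBesselPoly]
  | k + 2 =>
    have hk : (k.factorial : ℝ) ≠ 0 := by positivity
    rw [coeff_scaledBesselPoly, if_pos (Nat.le_add_left 2 k), Nat.add_sub_cancel]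
    simp only [Nat.factorial_succ, Nat.factorial_zero]
    push_cast
    field_simp
    ring

theorem coeff_X_mul_derivative_sub {A : Type*} [CommRing A] (p : A[X]) (m : ℕ) :
    (X * derivative p - p).coeff m = ((m : A) - 1) * p.coeff m := by
  cases m with
  | zero => simp
  | succ m =>
    simp only [coeff_sub, coeff_X_mul, coeff_derivative, Nat.cast_succ]
    ring

theorem eval_le_mul_eval_derivative {A : Type*} [CommRing A] [PartialOrder A]
    [IsOrderedRing A] {p : A[X]} {x : A} (hp : ∀ m, 0 ≤ p.coeff m) (hx : 0 ≤ x)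
    (h : p.coeff 0 ≤ p.coeff 2 * x ^ 2) : p.eval x ≤ x * (derivative p).eval x := by
  set q := X * derivative p - p with hq
  have low_terms : ∑ m ∈ Finset.range 3, q.coeff m * x ^ m = p.coeff 2 * x ^ 2 - p.coeff 0 := by
    simp only [hq, coeff_X_mul_derivative_sub, Finset.sum_range_succ, Finset.sum_range_zero]
    push_cast
    ring
  have higher_terms : ∀ m ∉ Finset.range 3, 0 ≤ q.coeff m * x ^ m := by
    intro m hm
    have one_le_m : 1 ≤ m := by
      rw [Finset.mem_range] at hm
      omega
    have one_le_cast : (1 : A) ≤ m := by simpa only [Nat.cast_one] using Nat.mono_cast one_le_m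
    rw [hq, coeff_X_mul_derivative_sub]
    exact mul_nonneg (mul_nonneg (sub_nonneg.2 one_le_cast) (hp m)) (pow_nonneg hx m)
  have eval_q : 0 ≤ q.eval x :=
    calc
      0 ≤ ∑ m ∈ Finset.range 3, q.coeff m * x ^ m := by rw [low_terms]; exact sub_nonneg.2 h
      _ ≤ ∑ m ∈ Finset.range (q.natDegree + 3), q.coeff m * x ^ m :=
        Finset.sum_le_sum_of_subset_of_nonneg (Finset.range_mono (Nat.le_add_left 3 _))
          fun m _ hm ↦ higher_terms m hm
      _ = q.eval x := (eval_eq_sum_range' (by omega) x).symm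
  simpa only [hq, eval_sub, eval_mul, eval_X, sub_nonneg] using eval_q

theorem R_pos (n : ℕ) {w : ℝ} (hw : 0 ≤ w) : 0 < R n w :=
  Finset.sum_pos' (fun m _ ↦ by positivity) ⟨0, by simp, by rw [pow_zero]; positivity⟩

theorem R_le_mul_deriv {n : ℕ} {w : ℝ} (hw : 0 ≤ w)
    (h : 2 ≤ ((n : ℝ) - 1) * n * (n + 1) * (n + 2) * w ^ 2) : R n w ≤ w * deriv (R n) w := by
  simp only [R_eq_eval_scaledBesselPoly, Polynomial.deriv]
  refine eval_le_mul_eval_derivative (coeff_scaledBesselPoly_nonneg n) hw ?_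
  rw [coeff_zero_scaledBesselPoly, coeff_two_scaledBesselPoly]
  linarith

theorem two_le_mul_sq_of_one_div_two_sqrt_three_le {n : ℕ} (hn : 2 ≤ n) {w : ℝ}
    (hw : 1 / (2 * Real.sqrt 3) ≤ w) :
    2 ≤ ((n : ℝ) - 1) * n * (n + 1) * (n + 2) * w ^ 2 := by
  have two_le_cast : (2 : ℝ) ≤ n := by exact_mod_cast hn
  have sub_one_nonneg : 0 ≤ (n : ℝ) - 1 := by linarith
  have w_sq : 1 / 12 ≤ w ^ 2 :=
    calc
      (1 / 12 : ℝ) = (1 / (2 * Real.sqrt 3)) ^ 2 := by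
        rw [div_pow, mul_pow, Real.sq_sqrt zero_le_three]; norm_num
      _ ≤ w ^ 2 := by gcongr
  calc
    (2 : ℝ) = (2 - 1) * 2 * (2 + 1) * (2 + 2) * (1 / 12) := by norm_num
    _ ≤ ((n : ℝ) - 1) * n * (n + 1) * (n + 2) * w ^ 2 := by gcongr

/-- Since the quadratic coefficient of `R n` is `(n - 1) n (n + 1) (n + 2) / 2`, the threshold on
`w₀` decreases with `n`; it is `1 / (2 * √3)` for `n = 2`. -/
theorem case_one_bound_general (γ : ℝ) (n : ℕ) (w₀ : ℝ) (hw₀ : 0 < w₀)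
    (hw : 2 ≤ ((n : ℝ) - 1) * n * (n + 1) * (n + 2) * w₀ ^ 2)
    (hroot : (1 - γ) * R n w₀ + 2 * w₀ ^ 2 * deriv (R n) w₀ = 0) :
    2 * w₀ ≤ γ - 1 ∧ -1 / (2 * w₀) ≤ -1 / (γ - 1) := by
  have bound : 2 * w₀ ≤ γ - 1 := by
    refine le_of_mul_le_mul_right ?_ (R_pos n hw₀.le)
    calc
      2 * w₀ * R n w₀ ≤ 2 * w₀ * (w₀ * deriv (R n) w₀) := by
        gcongr
        exact R_le_mul_deriv hw₀.le hw
      _ = (γ - 1) * R n w₀ := by linear_combination hroot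
  refine ⟨bound, ?_⟩
  rw [neg_div, neg_div]
  exact neg_le_neg (one_div_le_one_div_of_le (by positivity) bound)

/-- Estimate (4.8): if `γ > 1`, `n ≥ 2` and `w₀ ≥ 1/(2√3)` is a root of
`(1 − γ) R_n(w) + 2 w² R_n'(w) = 0`, then `2w₀ ≤ γ − 1` and `−1/(2w₀) ≤ −1/(γ−1)`. -/
theorem case_one_bound (γ : ℝ) (hγ : 1 < γ) (n : ℕ) (hn : 2 ≤ n) (w₀ : ℝ)
    (hw : 1 / (2 * Real.sqrt 3) ≤ w₀)
    (hroot : (1 - γ) * R n w₀ + 2 * w₀ ^ 2 * deriv (R n) w₀ = 0) :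
    2 * w₀ ≤ γ - 1 ∧ -1 / (2 * w₀) ≤ -1 / (γ - 1) := by
  exact case_one_bound_general γ n w₀ (lt_of_lt_of_le (by positivity) hw)
    (two_le_mul_sq_of_one_div_two_sqrt_three_le hn hw) hroot
end

section
/- Let γ > 1 be real, let n ≥ 2 be an integer, and let w₀ > 0 be a real number satisfying (1 − γ)·R_n(w₀) + 2·w₀²·R_n'(w₀) = 0. Then −1/(2w₀) ≤ −1/max{γ−1, √(γ−1)}. -/
/-!
Write `c_m` for the coefficients of `R_n`. The recursion `(m + 1) c_{m+1} = (n + m + 1)(n - m) c_m`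
gives
`(1 + (n + 1) x) R_n'(x) - n (n + 1) R_n(x) = ∑ m (n - m) c_m x ^ m ≥ 0` for `x ≥ 0`.
At a root `w` the ratio `R_n'(w) / R_n(w)` is `(γ - 1) / (2 w²)`, so the inequality becomes
`2 n (n + 1) w² ≤ (γ - 1) (1 + (n + 1) w)`. If `2 w` exceeded both `γ - 1` and `√(γ - 1)`, the right
side would be less than `2 (n + 3) w²`, which is impossible as soon as `n² ≥ 3`.
-/

open Finset

/-- The coefficient of `x ^ m` in `R n x`, that is, in `y_n(2x)` for the Bessel polynomial `y_n`.
The subtraction `n - m` is truncated, so this is the coefficient only for `m ≤ n`. -/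
noncomputable def besselCoeff (n m : ℕ) : ℝ :=
  (Nat.factorial (n + m) : ℝ) / ((Nat.factorial m : ℝ) * (Nat.factorial (n - m) : ℝ))

lemma besselCoeff_pos (n m : ℕ) : 0 < besselCoeff n m := by
  unfold besselCoeff
  positivity

lemma succ_mul_besselCoeff_succ {n m : ℕ} (hmn : m < n) :
    ((m : ℝ) + 1) * besselCoeff n (m + 1) = (n + m + 1) * (n - m) * besselCoeff n m := by
  obtain ⟨d, rfl⟩ := Nat.exists_eq_add_of_lt hmn
  have hsub : m + d + 1 - m = d + 1 := by lia
  have hsub_succ : m + d + 1 - (m + 1) = d := by lia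
  rw [besselCoeff, besselCoeff, hsub, hsub_succ, ← add_assoc, Nat.factorial_succ (m + d + 1 + m),
    Nat.factorial_succ m, Nat.factorial_succ d]
  push_cast
  field_simp
  ring

lemma R_eq_sum (n : ℕ) (x : ℝ) : R n x = ∑ m ∈ range (n + 1), besselCoeff n m * x ^ m :=
  rfl

lemma R_pos_s8 (n : ℕ) {x : ℝ} (hx : 0 ≤ x) : 0 < R n x :=
  sum_pos' (fun m _ ↦ mul_nonneg (besselCoeff_pos n m).le (pow_nonneg hx m))
    ⟨0, by simp, mul_pos (besselCoeff_pos n 0) (by simp)⟩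

lemma deriv_R (n : ℕ) (x : ℝ) :
    deriv (R n) x = ∑ m ∈ range (n + 1), besselCoeff n m * (m * x ^ (m - 1)) :=
  (HasDerivAt.fun_sum fun m _ ↦ (hasDerivAt_pow m x).const_mul (besselCoeff n m)).deriv

lemma mul_deriv_R (n : ℕ) (x : ℝ) :
    x * deriv (R n) x = ∑ m ∈ range (n + 1), m * (besselCoeff n m * x ^ m) := by
  rw [deriv_R, mul_sum]
  refine sum_congr rfl fun m _ ↦ ?_
  cases m with
  | zero => simp
  | succ m => rw [Nat.add_sub_cancel]; ring

lemma deriv_R_eq_sum_mul_besselCoeff (n : ℕ) (x : ℝ) :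
    deriv (R n) x =
      ∑ m ∈ range (n + 1), ((n : ℝ) + m + 1) * (n - m) * (besselCoeff n m * x ^ m) := by
  rw [deriv_R, sum_range_succ', sum_range_succ]
  simp only [Nat.cast_zero, zero_mul, mul_zero, sub_self, add_zero, Nat.add_sub_cancel]
  refine sum_congr rfl fun m hm ↦ ?_
  push_cast
  linear_combination x ^ m * succ_mul_besselCoeff_succ (mem_range.1 hm)

lemma mul_deriv_R_sub_mul_R (n : ℕ) (x : ℝ) :
    (1 + (n + 1) * x) * deriv (R n) x - n * (n + 1) * R n x =
      ∑ m ∈ range (n + 1), (m : ℝ) * (n - m) * (besselCoeff n m * x ^ m) := by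
  rw [one_add_mul, mul_assoc, mul_deriv_R, deriv_R_eq_sum_mul_besselCoeff, R_eq_sum, mul_sum,
    mul_sum, ← sum_add_distrib, ← sum_sub_distrib]
  exact sum_congr rfl fun m _ ↦ by ring

lemma mul_R_le_mul_deriv_R (n : ℕ) {x : ℝ} (hx : 0 ≤ x) :
    n * (n + 1) * R n x ≤ (1 + (n + 1) * x) * deriv (R n) x := by
  rw [← sub_nonneg, mul_deriv_R_sub_mul_R]
  refine sum_nonneg fun m hm ↦ ?_
  have hmn : (m : ℝ) ≤ n := Nat.cast_le.2 (mem_range_succ_iff.1 hm)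
  have hcoeff := besselCoeff_pos n m
  exact mul_nonneg (mul_nonneg m.cast_nonneg (sub_nonneg.2 hmn)) (by positivity)

lemma two_mul_sq_le_of_root {γ w : ℝ} {n : ℕ} (hw : 0 ≤ w)
    (hroot : (1 - γ) * R n w + 2 * w ^ 2 * deriv (R n) w = 0) :
    2 * (n * (n + 1)) * w ^ 2 ≤ (γ - 1) * (1 + (n + 1) * w) := by
  refine le_of_mul_le_mul_right ?_ (R_pos_s8 n hw)
  calc 2 * (n * (n + 1)) * w ^ 2 * R n w = 2 * w ^ 2 * (n * (n + 1) * R n w) := by ring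
    _ ≤ 2 * w ^ 2 * ((1 + (n + 1) * w) * deriv (R n) w) :=
      mul_le_mul_of_nonneg_left (mul_R_le_mul_deriv_R n hw) (by positivity)
    _ = (γ - 1) * (1 + (n + 1) * w) * R n w := by linear_combination (1 + (n + 1) * w) * hroot

lemma le_max_sqrt_of_mul_sq_le {a b c x : ℝ} (hb : 0 < b) (hc : 0 ≤ c)
    (h : (b + c) * x ^ 2 ≤ a * (b + c * x)) : x ≤ max a √a := by
  by_contra! hlt
  obtain ⟨hax, hsqrt⟩ := max_lt_iff.1 hlt
  have hx : 0 < x := (Real.sqrt_nonneg a).trans_lt hsqrt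
  have ha : a < x ^ 2 := (Real.sqrt_lt' hx).1 hsqrt
  refine h.not_gt ?_
  calc a * (b + c * x) = b * a + c * x * a := by ring
    _ < b * x ^ 2 + c * x * x :=
      add_lt_add_of_lt_of_le (mul_lt_mul_of_pos_left ha hb)
        (mul_le_mul_of_nonneg_left hax.le (by positivity))
    _ = (b + c) * x ^ 2 := by ring

/-- Estimate (4.7): if `γ > 1`, `n ≥ 2` and `w₀ > 0` is a root of
`(1 − γ) R_n(w) + 2 w² R_n'(w) = 0`, then `−1/(2w₀) ≤ −1/max{γ−1, √(γ−1)}`. -/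
theorem eigenvalue_bound (γ : ℝ) (hγ : 1 < γ) (n : ℕ) (hn : 2 ≤ n) (w₀ : ℝ)
    (hw0 : 0 < w₀)
    (hroot : (1 - γ) * R n w₀ + 2 * w₀ ^ 2 * deriv (R n) w₀ = 0) :
    -1 / (2 * w₀) ≤ -1 / max (γ - 1) (Real.sqrt (γ - 1)) := by
  have hn' : (2 : ℝ) ≤ n := Nat.ofNat_le_cast.2 hn
  have hcoeff : (2 : ℝ) + (n + 1) ≤ n * (n + 1) := by nlinarith
  have hbound : 2 * w₀ ≤ max (γ - 1) √(γ - 1) := by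
    refine le_max_sqrt_of_mul_sq_le (b := 2) (c := n + 1) two_pos (by positivity) ?_
    calc (2 + ((n : ℝ) + 1)) * (2 * w₀) ^ 2 ≤ n * (n + 1) * (2 * w₀) ^ 2 := by gcongr
      _ = 2 * (2 * (n * (n + 1)) * w₀ ^ 2) := by ring
      _ ≤ 2 * ((γ - 1) * (1 + (n + 1) * w₀)) :=
        mul_le_mul_of_nonneg_left (two_mul_sq_le_of_root hw0.le hroot) zero_le_two
      _ = (γ - 1) * (2 + (n + 1) * (2 * w₀)) := by ring
  rw [neg_div, neg_div]
  exact neg_le_neg (one_div_le_one_div_of_le (by positivity) hbound)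
end

section
/- For every M > 0 there exists δ > 0 such that for every real γ with 1 < γ < 1 + δ, every integer n ≥ 1, and every real number w₀ > 0 satisfying (1 − γ)·R_n(w₀) + 2·w₀²·R_n'(w₀) = 0, one has 1/(2w₀) > M; equivalently, the real eigenvalues λ = −1/(2w₀) tend to −∞ as γ → 1⁺, uniformly in n. -/
/-!
Since `R n` has nonnegative coefficients, with constant term `1` and linear coefficient
`k = n (n + 1)`, one has `R n x ≤ 1 + x R n' x` and `k ≤ R n' x` for `0 ≤ x`. Substituting both
into the root equation and cancelling `R n' w` gives `2 k w² ≤ (γ - 1) (1 + k w)`. The case `k = 2`,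
which is the weakest, is an equality at the root for `n = 1`; so that root bounds the positive roots
for all `n`, and it tends to `0` as `γ → 1` by its closed form.
-/

section NonnegCoefficients

open Polynomial

variable {S : Type*} [Semiring S] [PartialOrder S] [IsOrderedRing S] {p : S[X]} {x : S}

theorem coeff_zero_le_eval (hp : ∀ m, 0 ≤ p.coeff m) (hx : 0 ≤ x) : p.coeff 0 ≤ p.eval x := by
  rw [eval_eq_sum_range]
  simpa only [pow_zero, mul_one] using
    Finset.single_le_sum (f := fun m ↦ p.coeff m * x ^ m)
      (fun m _ ↦ mul_nonneg (hp m) (pow_nonneg hx m)) (Finset.mem_range.2 p.natDegree.succ_pos)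

theorem coeff_one_le_eval_derivative (hp : ∀ m, 0 ≤ p.coeff m) (hx : 0 ≤ x) :
    p.coeff 1 ≤ (derivative p).eval x := by
  have hp' (m : ℕ) : 0 ≤ (derivative p).coeff m := by
    rw [coeff_derivative]
    exact mul_nonneg (hp _) (add_nonneg m.cast_nonneg zero_le_one)
  simpa [coeff_derivative] using coeff_zero_le_eval hp' hx

theorem eval_le_coeff_zero_add_eval_derivative_mul (hp : ∀ m, 0 ≤ p.coeff m) (hx : 0 ≤ x) :
    p.eval x ≤ p.coeff 0 + (derivative p).eval x * x := by
  rw [eval_eq_sum_range, derivative_eval, sum_over_range _ (by simp), Finset.sum_range_succ',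
    Finset.sum_range_succ', add_comm]
  simp only [pow_zero, mul_one, Nat.cast_zero, mul_zero, zero_mul, add_zero, Finset.sum_mul,
    Nat.add_sub_cancel]
  refine add_le_add le_rfl (Finset.sum_le_sum fun m _ ↦ ?_)
  have hm : (1 : S) ≤ (m + 1 : ℕ) := by
    rw [Nat.cast_succ]
    exact le_add_of_nonneg_left m.cast_nonneg
  calc p.coeff (m + 1) * x ^ (m + 1)
      ≤ p.coeff (m + 1) * (m + 1 : ℕ) * x ^ (m + 1) :=
        mul_le_mul_of_nonneg_right (le_mul_of_one_le_right (hp _) hm) (pow_nonneg hx _)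
    _ = p.coeff (m + 1) * (m + 1 : ℕ) * x ^ m * x := by rw [pow_succ, ← mul_assoc]

end NonnegCoefficients

section RPolynomial

open Polynomial

/-- The real polynomial whose evaluation is `R n`; it is the Bessel polynomial `yₙ` evaluated at
`2X`. -/
noncomputable def rPolynomial (n : ℕ) : ℝ[X] :=
  ∑ m ∈ Finset.range (n + 1),
    monomial m ((n + m).factorial / (m.factorial * (n - m).factorial) : ℝ)

theorem eval_rPolynomial (n : ℕ) (x : ℝ) : (rPolynomial n).eval x = R n x := by
  simp only [rPolynomial, R, eval_finsetSum, eval_monomial]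

theorem coeff_rPolynomial (n m : ℕ) :
    (rPolynomial n).coeff m =
      if m ≤ n then ((n + m).factorial / (m.factorial * (n - m).factorial) : ℝ) else 0 := by
  simp [rPolynomial, finsetSum_coeff, coeff_monomial]

theorem coeff_rPolynomial_nonneg (n m : ℕ) : 0 ≤ (rPolynomial n).coeff m := by
  rw [coeff_rPolynomial]
  positivity

theorem coeff_rPolynomial_zero (n : ℕ) : (rPolynomial n).coeff 0 = 1 := by
  simp [coeff_rPolynomial, n.factorial_ne_zero]

theorem coeff_rPolynomial_one (n : ℕ) : (rPolynomial n).coeff 1 = n * (n + 1) := by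
  rw [coeff_rPolynomial]
  cases n with
  | zero => simp
  | succ n =>
    simp only [Nat.le_add_left, if_true, Nat.add_sub_cancel, Nat.factorial_succ,
      Nat.factorial_zero]
    push_cast
    field_simp

theorem deriv_R_s11 (n : ℕ) (x : ℝ) : deriv (R n) x = (rPolynomial n).derivative.eval x := by
  rw [← funext (eval_rPolynomial n), Polynomial.deriv]

end RPolynomial

section Derivative

variable {n : ℕ} {x : ℝ}

theorem mul_succ_le_deriv_R (hx : 0 ≤ x) : n * (n + 1) ≤ deriv (R n) x := by
  rw [deriv_R_s11, ← coeff_rPolynomial_one]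
  exact coeff_one_le_eval_derivative (coeff_rPolynomial_nonneg n) hx

theorem R_le_one_add_deriv_mul (hx : 0 ≤ x) : R n x ≤ 1 + deriv (R n) x * x := by
  rw [deriv_R_s11, ← eval_rPolynomial, ← coeff_rPolynomial_zero n]
  exact eval_le_coeff_zero_add_eval_derivative_mul (coeff_rPolynomial_nonneg n) hx

theorem mul_succ_mul_R_le (hx : 0 ≤ x) :
    n * (n + 1) * R n x ≤ (1 + n * (n + 1) * x) * deriv (R n) x :=
  calc n * (n + 1) * R n x
      ≤ n * (n + 1) * (1 + deriv (R n) x * x) := by gcongr; exact R_le_one_add_deriv_mul hx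
    _ = n * (n + 1) + n * (n + 1) * x * deriv (R n) x := by ring
    _ ≤ deriv (R n) x + n * (n + 1) * x * deriv (R n) x := by gcongr; exact mul_succ_le_deriv_R hx
    _ = (1 + n * (n + 1) * x) * deriv (R n) x := by ring

end Derivative

theorem le_add_sqrt_div_two_of_sq_le {b c u : ℝ} (h : u ^ 2 ≤ b * u + c) :
    u ≤ (b + √(b ^ 2 + 4 * c)) / 2 := by
  have hsqrt : 2 * u - b ≤ √(b ^ 2 + 4 * c) := Real.le_sqrt_of_sq_le (by linarith)
  linarith

/-- The positive root `w₀` of `(1 - γ) R₁(w) + 2 w² R₁'(w) = 0` for `1 < γ`, in closed form. -/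
noncomputable def firstRoot (γ : ℝ) : ℝ := ((γ - 1) + √((γ - 1) ^ 2 + 4 * (γ - 1))) / 4

theorem tendsto_firstRoot_nhds_one : Filter.Tendsto firstRoot (nhds 1) (nhds 0) := by
  have hcont : Continuous firstRoot := by unfold firstRoot; fun_prop
  simpa [firstRoot] using hcont.tendsto 1

section RootBound

variable {n : ℕ} {γ w : ℝ}

theorem two_mul_mul_succ_mul_sq_root_le (hγ : 1 ≤ γ) (hn : 1 ≤ n) (hw : 0 ≤ w)
    (hroot : (1 - γ) * R n w + 2 * w ^ 2 * deriv (R n) w = 0) :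
    2 * (n * (n + 1)) * w ^ 2 ≤ (γ - 1) * (1 + n * (n + 1) * w) := by
  have hderiv : 0 < deriv (R n) w := lt_of_lt_of_le (by positivity) (mul_succ_le_deriv_R hw)
  refine le_of_mul_le_mul_right ?_ hderiv
  calc 2 * (n * (n + 1)) * w ^ 2 * deriv (R n) w
      = (γ - 1) * (n * (n + 1) * R n w) := by linear_combination (n * (n + 1) : ℝ) * hroot
    _ ≤ (γ - 1) * ((1 + n * (n + 1) * w) * deriv (R n) w) :=
        mul_le_mul_of_nonneg_left (mul_succ_mul_R_le hw) (sub_nonneg.2 hγ)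
    _ = (γ - 1) * (1 + n * (n + 1) * w) * deriv (R n) w := by ring

theorem sq_two_mul_root_le (hγ : 1 ≤ γ) (hn : 1 ≤ n) (hw : 0 ≤ w)
    (hroot : (1 - γ) * R n w + 2 * w ^ 2 * deriv (R n) w = 0) :
    (2 * w) ^ 2 ≤ (γ - 1) * (2 * w) + (γ - 1) := by
  have hn' : (1 : ℝ) ≤ n := mod_cast hn
  have htwo : (2 : ℝ) ≤ n * (n + 1) := by nlinarith
  refine le_of_mul_le_mul_left ?_ (by linarith : (0 : ℝ) < n * (n + 1))
  calc n * (n + 1) * (2 * w) ^ 2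
      = 2 * (2 * (n * (n + 1)) * w ^ 2) := by ring
    _ ≤ 2 * ((γ - 1) * (1 + n * (n + 1) * w)) :=
        mul_le_mul_of_nonneg_left (two_mul_mul_succ_mul_sq_root_le hγ hn hw hroot) zero_le_two
    _ = (γ - 1) * 2 + n * (n + 1) * ((γ - 1) * (2 * w)) := by ring
    _ ≤ (γ - 1) * (n * (n + 1)) + n * (n + 1) * ((γ - 1) * (2 * w)) := by
        gcongr
    _ = n * (n + 1) * ((γ - 1) * (2 * w) + (γ - 1)) := by ring

theorem root_le_firstRoot (hγ : 1 ≤ γ) (hn : 1 ≤ n) (hw : 0 ≤ w)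
    (hroot : (1 - γ) * R n w + 2 * w ^ 2 * deriv (R n) w = 0) : w ≤ firstRoot γ := by
  have h := le_add_sqrt_div_two_of_sq_le (sq_two_mul_root_le hγ hn hw hroot)
  rw [firstRoot]
  linarith

end RootBound

/-- As `γ → 1⁺` the real eigenvalues `λ = −1/(2w₀)` go to `−∞`, uniformly in `n`:
for every `M > 0` there is `δ > 0` such that for all `1 < γ < 1 + δ`, all `n ≥ 1`
and all positive roots `w₀` of `(1 − γ) R_n(w) + 2 w² R_n'(w) = 0`, one has `1/(2w₀) > M`. -/
theorem eigenvalues_to_neg_infinity (M : ℝ) (hM : 0 < M) :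
    ∃ δ : ℝ, 0 < δ ∧ ∀ γ : ℝ, 1 < γ → γ < 1 + δ → ∀ n : ℕ, 1 ≤ n → ∀ w₀ : ℝ, 0 < w₀ →
      (1 - γ) * R n w₀ + 2 * w₀ ^ 2 * deriv (R n) w₀ = 0 → 1 / (2 * w₀) > M := by
  obtain ⟨δ, hδ, hsmall⟩ := Metric.eventually_nhds_iff.1
    (tendsto_firstRoot_nhds_one.eventually_lt_const (by positivity : 0 < 1 / (2 * M)))
  refine ⟨δ, hδ, fun γ hγ hγδ n hn w₀ hw₀ hroot ↦ ?_⟩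
  have hdist : dist γ 1 < δ := by
    rw [Real.dist_eq, abs_of_pos (sub_pos.2 hγ)]
    linarith
  have hlt : w₀ < 1 / (2 * M) :=
    (root_le_firstRoot hγ.le hn hw₀.le hroot).trans_lt (hsmall hdist)
  rw [lt_div_iff₀ (by positivity)] at hlt
  rw [gt_iff_lt, lt_div_iff₀ (by positivity)]
  linarith
end
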